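/- Under the multi-leader assumption, the rank of the signed Laplacian L_s equals N − l₁ − l_{2SB}. -/

import Mathlib

open Matrix

/-- The signed incidence matrix of a signed digraph. -/
def Es {N M : ℕ} (head tail : Fin M → Fin N) (σ : Fin M → ℝ) : Matrix (Fin N) (Fin M) ℝ :=
  Matrix.of fun i k => if i = head k then 1 else if i = tail k then -σ k else 0

/-- The signed in-incidence matrix of a signed digraph. -/
def Ein {N M : ℕ} (head tail : Fin M → Fin N) (σ : Fin M → ℝ) : Matrix (Fin N) (Fin M) ℝ :=
  Matrix.of fun i k => if i = tail k then -σ k else 0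

/-- The signed Laplacian `L_s = E_{s⊙} E_sᵀ`. -/
def Ls {N M : ℕ} (head tail : Fin M → Fin N) (σ : Fin M → ℝ) : Matrix (Fin N) (Fin N) ℝ :=
  Ein head tail σ * (Es head tail σ)ᵀ

/-- The signed edge Laplacian `L_{e_s} = E_sᵀ E_{s⊙}`. -/
def Les {N M : ℕ} (head tail : Fin M → Fin N) (σ : Fin M → ℝ) : Matrix (Fin M) (Fin M) ℝ :=
  (Es head tail σ)ᵀ * Ein head tail σ

/-- Node `b` is reachable from node `a`. -/
def Reaches {N M : ℕ} (head tail : Fin M → Fin N) : Fin N → Fin N → Prop :=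
  Relation.ReflTransGen fun a b => ∃ k, head k = a ∧ tail k = b

/-- The digraph contains a directed spanning tree. -/
def HasSpanningTree {N M : ℕ} (head tail : Fin M → Fin N) : Prop :=
  ∃ r, ∀ b, Reaches head tail r b

/-- A root node: a node that is the tail of no edge. -/
def IsRootNode {N M : ℕ} (tail : Fin M → Fin N) (i : Fin N) : Prop :=
  ∀ k, tail k ≠ i

/-- Structural balance of a signed digraph. -/
def StructBalanced {N M : ℕ} (head tail : Fin M → Fin N) (σ : Fin M → ℝ) : Prop :=
  ∃ d : Fin N → ℝ, (∀ i, d i = 1 ∨ d i = -1) ∧ ∀ k, d (head k) * d (tail k) = σ k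

/-- A rooted strongly connected component. -/
def IsRootedSCC {N M : ℕ} (head tail : Fin M → Fin N) (S : Finset (Fin N)) : Prop :=
  2 ≤ S.card ∧ (∀ k, tail k ∈ S → head k ∈ S) ∧
    ∀ a ∈ S, ∀ b ∈ S, Reaches head tail a b

/-- Structural balance of a rooted SCC. -/
def SCCBalanced {N M : ℕ} (head tail : Fin M → Fin N) (σ : Fin M → ℝ)
    (S : Finset (Fin N)) : Prop :=
  ∃ d : Fin N → ℝ, (∀ i ∈ S, d i = 1 ∨ d i = -1) ∧
    ∀ k, head k ∈ S → tail k ∈ S → d (head k) * d (tail k) = σ k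

/-!
Call a nonempty, strongly connected set of nodes that no edge enters from outside a *source
component*. Source components are the singletons of root nodes (trivially balanced) and the rooted
SCCs, so it suffices to show that the kernel of `L_s` has one dimension per balanced source
component.

If `L_s x = 0` at a node where `|x|` is maximal, then `x (tail k) = σ k * x (head k)` along every
edge entering that node. Hence the maximum of `|x|` propagates against the edges to some source
component, on which `x / max |x|` is then a balancing sign pattern. Consequently a kernel vector
that vanishes at a chosen node of each balanced source component is zero. By the same uniqueness
principle the Dirichlet problem with data on the balanced source components is solvable, which
extends each balancing sign pattern by a kernel vector vanishing on the other balanced source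
components. These extensions are dual to evaluation at the chosen nodes.
-/

theorem exists_dirichlet_solution {ι F : Type*} [Finite ι] [Field F]
    (f : (ι → F) →ₗ[F] (ι → F)) (U : Set ι)
    (huniq : ∀ x, (∀ i ∈ U, x i = 0) → (∀ i ∉ U, f x i = 0) → x = 0) (b : ι → F) :
    ∃ x, (∀ i ∈ U, x i = b i) ∧ ∀ i ∉ U, f x i = 0 := by
  classical
  let g : (ι → F) →ₗ[F] (ι → F) :=
    LinearMap.pi fun i => if i ∈ U then LinearMap.proj i else LinearMap.proj i ∘ₗ f
  have g_of_mem : ∀ x, ∀ i ∈ U, g x i = x i := fun x i hi => by simp [g, hi]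
  have g_of_notMem : ∀ x, ∀ i ∉ U, g x i = f x i := fun x i hi => by simp [g, hi]
  have g_injective : Function.Injective g := by
    refine (injective_iff_map_eq_zero g).2 fun x hx => huniq x (fun i hi => ?_) fun i hi => ?_
    · rw [← g_of_mem x i hi, hx, Pi.zero_apply]
    · rw [← g_of_notMem x i hi, hx, Pi.zero_apply]
  obtain ⟨x, hx⟩ := LinearMap.injective_iff_surjective.1 g_injective (U.indicator b)
  refine ⟨x, fun i hi => ?_, fun i hi => ?_⟩
  · rw [← g_of_mem x i hi, hx, Set.indicator_of_mem hi]
  · rw [← g_of_notMem x i hi, hx, Set.indicator_of_notMem hi]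

theorem injective_of_pairwise_disjoint {ι α : Type*} [PartialOrder α] [OrderBot α] {f : ι → α}
    (hbot : ∀ j, f j ≠ ⊥) (hdisj : Pairwise fun j j' => Disjoint (f j) (f j')) :
    Function.Injective f :=
  fun j _ hjj' => hdisj.eq fun hdisjoint => hbot j (hdisjoint.eq_bot_of_le hjj'.le)

theorem abs_sign_mul {s : ℝ} (hs : s = 1 ∨ s = -1) (y : ℝ) : |s * y| = |y| := by
  rw [abs_mul, (abs_eq zero_le_one).2 hs, one_mul]

section SourceComponents

variable {N M : ℕ} {head tail : Fin M → Fin N} {σ : Fin M → ℝ} {S T : Finset (Fin N)}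

theorem mem_of_reaches {U : Set (Fin N)} (hU : ∀ k, tail k ∈ U → head k ∈ U) {a b : Fin N}
    (hab : Reaches head tail a b) (hb : b ∈ U) : a ∈ U := by
  induction hab using Relation.ReflTransGen.head_induction_on with
  | refl => exact hb
  | head hedge _ ih =>
    obtain ⟨k, rfl, rfl⟩ := hedge
    exact hU k ih

/-- A source component: a nonempty strongly connected set of nodes which no edge enters from
outside. In contrast to `IsRootedSCC`, a single node is allowed, so that root nodes and rooted SCCs
can be treated alike. -/
def IsSourceComponent (head tail : Fin M → Fin N) (T : Finset (Fin N)) : Prop :=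
  T.Nonempty ∧ (∀ k, tail k ∈ T → head k ∈ T) ∧ ∀ a ∈ T, ∀ b ∈ T, Reaches head tail a b

namespace IsSourceComponent

theorem subset_of_mem (hS : IsSourceComponent head tail S)
    (hT : IsSourceComponent head tail T) {i : Fin N} (hiS : i ∈ S) (hiT : i ∈ T) : S ⊆ T :=
  fun a ha => mem_of_reaches (U := T) hT.2.1 (hS.2.2 a ha i hiS) hiT

theorem eq_of_mem (hS : IsSourceComponent head tail S)
    (hT : IsSourceComponent head tail T) {i : Fin N} (hiS : i ∈ S) (hiT : i ∈ T) : S = T :=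
  (hS.subset_of_mem hT hiS hiT).antisymm (hT.subset_of_mem hS hiT hiS)

end IsSourceComponent

open Classical in
/-- The nodes from which `a` is reachable, including `a` itself. -/
noncomputable def ancestors (head tail : Fin M → Fin N) (a : Fin N) : Finset (Fin N) :=
  {b | Reaches head tail b a}

theorem mem_ancestors {a b : Fin N} : b ∈ ancestors head tail a ↔ Reaches head tail b a := by
  simp [ancestors]

theorem self_mem_ancestors (a : Fin N) : a ∈ ancestors head tail a :=
  mem_ancestors.2 .refl

theorem ancestors_subset {a b : Fin N} (hba : Reaches head tail b a) :
    ancestors head tail b ⊆ ancestors head tail a :=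
  fun _ hc => mem_ancestors.2 ((mem_ancestors.1 hc).trans hba)

theorem isSourceComponent_ancestors {a : Fin N}
    (ha : ∀ b, Reaches head tail b a → Reaches head tail a b) :
    IsSourceComponent head tail (ancestors head tail a) :=
  ⟨⟨a, self_mem_ancestors a⟩,
    fun k hk => mem_ancestors.2 (.head ⟨k, rfl, rfl⟩ (mem_ancestors.1 hk)),
    fun _ hb _ hc => (mem_ancestors.1 hb).trans (ha _ (mem_ancestors.1 hc))⟩

theorem exists_isSourceComponent_reaches (i : Fin N) :
    ∃ T, IsSourceComponent head tail T ∧ ∃ a ∈ T, Reaches head tail a i := by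
  obtain ⟨a, hai, hmin⟩ := (ancestors head tail i).exists_min_image
    (fun b => (ancestors head tail b).card) ⟨i, self_mem_ancestors i⟩
  rw [mem_ancestors] at hai
  refine ⟨_, isSourceComponent_ancestors fun b hba => ?_, a, self_mem_ancestors a, hai⟩
  have heq : ancestors head tail b = ancestors head tail a :=
    Finset.eq_of_subset_of_card_le (ancestors_subset hba)
      (hmin b (mem_ancestors.2 (hba.trans hai)))
  exact mem_ancestors.1 (heq ▸ self_mem_ancestors a)

theorem IsRootedSCC.isSourceComponent (hT : IsRootedSCC head tail T) :
    IsSourceComponent head tail T :=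
  ⟨Finset.card_pos.1 (zero_lt_two.trans_le hT.1), hT.2⟩

theorem isSourceComponent_singleton_iff (hht : ∀ k, head k ≠ tail k) {i : Fin N} :
    IsSourceComponent head tail {i} ↔ IsRootNode tail i := by
  constructor
  · intro hi k hk
    have hhead : head k = i := by simpa using hi.2.1 k (by simpa using hk)
    exact hht k (hhead.trans hk.symm)
  · intro hi
    refine ⟨Finset.singleton_nonempty i, fun k hk => ?_, fun a ha b hb => ?_⟩
    · exact absurd (Finset.mem_singleton.1 hk) (hi k)
    · rw [Finset.mem_singleton.1 ha, Finset.mem_singleton.1 hb]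
      exact .refl

theorem isSourceComponent_iff (hht : ∀ k, head k ≠ tail k) :
    IsSourceComponent head tail T ↔
      (∃ i, IsRootNode tail i ∧ {i} = T) ∨ IsRootedSCC head tail T := by
  constructor
  · intro hT
    rcases hT.1.exists_eq_singleton_or_nontrivial with ⟨i, rfl⟩ | hnontrivial
    · exact .inl ⟨i, (isSourceComponent_singleton_iff hht).1 hT, rfl⟩
    · exact .inr ⟨Finset.one_lt_card_iff_nontrivial.2 hnontrivial, hT.2⟩
  · rintro (⟨i, hi, rfl⟩ | hT)
    · exact (isSourceComponent_singleton_iff hht).2 hi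
    · exact hT.isSourceComponent

theorem sccBalanced_singleton (hht : ∀ k, head k ≠ tail k) (i : Fin N) :
    SCCBalanced head tail σ {i} := by
  refine ⟨1, fun _ _ => .inl rfl, fun k hhead htail => ?_⟩
  rw [Finset.mem_singleton] at hhead htail
  exact absurd (hhead.trans htail.symm) (hht k)

/-- The source components that are structurally balanced; their number is the nullity of the
signed Laplacian. -/
def balancedSources (head tail : Fin M → Fin N) (σ : Fin M → ℝ) : Set (Finset (Fin N)) :=
  {T | IsSourceComponent head tail T ∧ SCCBalanced head tail σ T}

theorem balancedSources_eq_union (hht : ∀ k, head k ≠ tail k) :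
    balancedSources head tail σ = (fun i => {i}) '' {i | IsRootNode tail i} ∪
      {T | IsRootedSCC head tail T ∧ SCCBalanced head tail σ T} := by
  ext T
  simp only [balancedSources, isSourceComponent_iff hht, Set.mem_ofPred_eq, Set.mem_union,
    Set.mem_image, or_and_right]
  refine or_congr_left (and_iff_left_of_imp ?_)
  rintro ⟨i, -, rfl⟩
  exact sccBalanced_singleton hht i

theorem ncard_balancedSources (hht : ∀ k, head k ≠ tail k) :
    (balancedSources head tail σ).ncard = {i | IsRootNode tail i}.ncard +
      {T | IsRootedSCC head tail T ∧ SCCBalanced head tail σ T}.ncard := by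
  rw [balancedSources_eq_union hht, Set.ncard_union_eq,
    Set.ncard_image_of_injective _ Finset.singleton_injective]
  rw [Set.disjoint_left]
  rintro _ ⟨i, -, rfl⟩ ⟨hSCC, -⟩
  simpa using hSCC.1

theorem ncard_isRootedSCC_and {ι : Type*} {S : ι → Finset (Fin N)}
    (hSCCs : ∀ j, IsRootedSCC head tail (S j))
    (hall : ∀ T : Finset (Fin N), IsRootedSCC head tail T → ∃ j, T = S j)
    (hinj : Function.Injective S) (P : Finset (Fin N) → Prop) :
    {T | IsRootedSCC head tail T ∧ P T}.ncard = {j | P (S j)}.ncard := by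
  rw [← Set.ncard_image_of_injective _ hinj]
  congr 1
  ext T
  constructor
  · rintro ⟨hT, hPT⟩
    obtain ⟨j, rfl⟩ := hall T hT
    exact ⟨j, hPT, rfl⟩
  · rintro ⟨j, hPj, rfl⟩
    exact ⟨hSCCs j, hPj⟩

end SourceComponents

section Laplacian

variable {N M : ℕ} {head tail : Fin M → Fin N} {σ : Fin M → ℝ} {T : Finset (Fin N)}

theorem Es_transpose_mulVec_apply (hht : ∀ k, head k ≠ tail k) (x : Fin N → ℝ) (k : Fin M) :
    ((Es head tail σ)ᵀ *ᵥ x) k = x (head k) - σ k * x (tail k) := by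
  have hentry : ∀ i, (Es head tail σ)ᵀ k i * x i =
      (if i = head k then x i else 0) + if i = tail k then -σ k * x i else 0 := by
    intro i
    rw [transpose_apply, Es, of_apply]
    by_cases hhead : i = head k
    · simp [hhead, hht k]
    · simp [hhead]
  simp only [mulVec, dotProduct, hentry, Finset.sum_add_distrib, Finset.sum_ite_eq',
    Finset.mem_univ, if_true, neg_mul, ← sub_eq_add_neg]

theorem Ls_mulVec_apply (hht : ∀ k, head k ≠ tail k) (hσ : ∀ k, σ k = 1 ∨ σ k = -1)
    (x : Fin N → ℝ) (i : Fin N) :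
    (Ls head tail σ *ᵥ x) i = ∑ k with tail k = i, (x (tail k) - σ k * x (head k)) := by
  rw [Ls, ← mulVec_mulVec, Finset.sum_filter, mulVec, dotProduct]
  refine Finset.sum_congr rfl fun k _ => ?_
  rw [Es_transpose_mulVec_apply hht, Ein, of_apply]
  by_cases hk : tail k = i
  · rw [if_pos hk.symm, if_pos hk]
    linear_combination x (tail k) * mul_self_eq_one_iff.2 (hσ k)
  · rw [if_neg (Ne.symm hk), if_neg hk, zero_mul]

theorem Ls_mulVec_apply_eq_zero (hht : ∀ k, head k ≠ tail k) (hσ : ∀ k, σ k = 1 ∨ σ k = -1)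
    {x : Fin N → ℝ} {i : Fin N} (hx : ∀ k, tail k = i → x (tail k) = σ k * x (head k)) :
    (Ls head tail σ *ᵥ x) i = 0 := by
  rw [Ls_mulVec_apply hht hσ]
  exact Finset.sum_eq_zero fun k hk => sub_eq_zero.2 (hx k (Finset.mem_filter.1 hk).2)

theorem tail_eq_sign_mul_head_of_max (hht : ∀ k, head k ≠ tail k)
    (hσ : ∀ k, σ k = 1 ∨ σ k = -1) {x : Fin N → ℝ} {k : Fin M}
    (hmax : ∀ i, |x i| ≤ |x (tail k)|) (hL : (Ls head tail σ *ᵥ x) (tail k) = 0) :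
    x (tail k) = σ k * x (head k) := by
  have hle : ∀ l, |σ l * x (head l)| ≤ |x (tail k)| := fun l =>
    (abs_sign_mul (hσ l) _).trans_le (hmax _)
  rw [Ls_mulVec_apply hht hσ] at hL
  have hsum : ∑ l with tail l = tail k, x (tail k) * (x (tail l) - σ l * x (head l)) = 0 := by
    rw [← Finset.mul_sum, hL, mul_zero]
  have hnonneg : ∀ l ∈ Finset.univ.filter (tail · = tail k),
      0 ≤ x (tail k) * (x (tail l) - σ l * x (head l)) := by
    intro l hl
    rw [(Finset.mem_filter.1 hl).2, mul_sub, sub_nonneg]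
    calc x (tail k) * (σ l * x (head l))
        ≤ |x (tail k)| * |σ l * x (head l)| := (le_abs_self _).trans_eq (abs_mul _ _)
      _ ≤ |x (tail k)| * |x (tail k)| := mul_le_mul_of_nonneg_left (hle l) (abs_nonneg _)
      _ = x (tail k) * x (tail k) := abs_mul_abs_self _
  have hterm := (Finset.sum_eq_zero_iff_of_nonneg hnonneg).1 hsum k (by simp)
  rcases mul_eq_zero.1 hterm with hzero | hdiff
  · have hhead := hle k
    rw [hzero, abs_zero, abs_nonpos_iff] at hhead
    rw [hzero, hhead]
  · exact sub_eq_zero.1 hdiff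

theorem abs_eq_of_reaches_of_max (hht : ∀ k, head k ≠ tail k) (hσ : ∀ k, σ k = 1 ∨ σ k = -1)
    {x : Fin N → ℝ} {m : ℝ} (hmax : ∀ i, |x i| ≤ m)
    (hL : ∀ i, |x i| = m → (Ls head tail σ *ᵥ x) i = 0)
    {a b : Fin N} (hab : Reaches head tail a b) (hb : |x b| = m) : |x a| = m := by
  refine mem_of_reaches (U := {i | |x i| = m}) (fun k hk => ?_) hab hb
  have hedge := tail_eq_sign_mul_head_of_max hht hσ (fun i => (hmax i).trans_eq hk.symm) (hL _ hk)
  rwa [Set.mem_ofPred_eq, hedge, abs_sign_mul (hσ k)] at hk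

theorem sccBalanced_of_abs_eq {x : Fin N → ℝ} {m : ℝ} (hm : 0 < m) (habs : ∀ i ∈ T, |x i| = m)
    (hedge : ∀ k, tail k ∈ T → x (tail k) = σ k * x (head k)) : SCCBalanced head tail σ T := by
  refine ⟨fun i => x i / m, fun i hi => ?_, fun k hhead htail => ?_⟩
  · rcases (abs_eq hm.le).1 (habs i hi) with hpos | hneg
    · exact .inl ((div_eq_one_iff_eq hm.ne').2 hpos)
    · exact .inr ((div_eq_iff hm.ne').2 (by rw [hneg, neg_one_mul]))
  · have hsq : x (head k) * x (head k) = m * m := by rw [← habs _ hhead, abs_mul_abs_self]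
    field_simp
    rw [hedge k htail]
    linear_combination σ k * hsq

theorem eq_zero_of_Ls_mulVec_eq_zero (hht : ∀ k, head k ≠ tail k)
    (hσ : ∀ k, σ k = 1 ∨ σ k = -1) {x : Fin N → ℝ}
    (hL : ∀ i, x i ≠ 0 → (Ls head tail σ *ᵥ x) i = 0)
    (hzero : ∀ T ∈ balancedSources head tail σ, ∃ r ∈ T, x r = 0) : x = 0 := by
  by_contra hx
  obtain ⟨t, ht⟩ := Function.ne_iff.1 hx
  obtain ⟨i, -, hi⟩ := Finset.univ.exists_max_image (|x ·|) ⟨t, Finset.mem_univ t⟩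
  have hmax : ∀ j, |x j| ≤ |x i| := fun j => hi j (Finset.mem_univ j)
  have hpos : 0 < |x i| := (abs_pos.2 ht).trans_le (hmax t)
  have hLmax : ∀ j, |x j| = |x i| → (Ls head tail σ *ᵥ x) j = 0 := fun j hj =>
    hL j (abs_pos.1 (hj ▸ hpos))
  obtain ⟨T, hT, a, haT, hai⟩ := exists_isSourceComponent_reaches (head := head) (tail := tail) i
  have habs : ∀ b ∈ T, |x b| = |x i| := fun b hb =>
    abs_eq_of_reaches_of_max hht hσ hmax hLmax ((hT.2.2 b hb a haT).trans hai) rfl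
  have hedge : ∀ k, tail k ∈ T → x (tail k) = σ k * x (head k) := fun k hk =>
    tail_eq_sign_mul_head_of_max hht hσ (fun j => (hmax j).trans_eq (habs _ hk).symm)
      (hLmax _ (habs _ hk))
  obtain ⟨r, hrT, hr⟩ := hzero T ⟨hT, sccBalanced_of_abs_eq hpos habs hedge⟩
  rw [← habs r hrT, hr, abs_zero] at hpos
  exact hpos.false

theorem exists_ker_extension (hht : ∀ k, head k ≠ tail k) (hσ : ∀ k, σ k = 1 ∨ σ k = -1)
    {U : Set (Fin N)} (hU : ∀ k, tail k ∈ U → head k ∈ U)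
    (hmeet : ∀ T ∈ balancedSources head tail σ, ∃ r ∈ T, r ∈ U) {b : Fin N → ℝ}
    (hb : ∀ k, tail k ∈ U → b (tail k) = σ k * b (head k)) :
    ∃ x, Ls head tail σ *ᵥ x = 0 ∧ ∀ i ∈ U, x i = b i := by
  obtain ⟨x, hxU, hxL⟩ : ∃ x, (∀ i ∈ U, x i = b i) ∧
      ∀ i ∉ U, (Ls head tail σ).mulVecLin x i = 0 := by
    refine exists_dirichlet_solution _ U (fun x hxU hxL => ?_) b
    refine eq_zero_of_Ls_mulVec_eq_zero hht hσ (fun i hi => hxL i fun hiU => hi (hxU i hiU)) ?_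
    intro T hT
    obtain ⟨r, hrT, hrU⟩ := hmeet T hT
    exact ⟨r, hrT, hxU r hrU⟩
  refine ⟨x, funext fun i => ?_, hxU⟩
  by_cases hi : i ∈ U
  · refine Ls_mulVec_apply_eq_zero hht hσ fun k hk => ?_
    subst hk
    rw [hxU _ hi, hxU _ (hU k hi), hb k hi]
  · exact hxL i hi

theorem SCCBalanced.exists_apply_eq_one (hbal : SCCBalanced head tail σ T)
    (hT : ∀ k, tail k ∈ T → head k ∈ T) {r : Fin N} (hr : r ∈ T) :
    ∃ d : Fin N → ℝ, d r = 1 ∧ ∀ k, tail k ∈ T → d (tail k) = σ k * d (head k) := by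
  obtain ⟨d, hd, hdσ⟩ := hbal
  have hsq : ∀ i ∈ T, d i * d i = 1 := fun i hi => mul_self_eq_one_iff.2 (hd i hi)
  refine ⟨fun i => d r * d i, hsq r hr, fun k hk => ?_⟩
  rw [← hdσ k (hT k hk) hk]
  linear_combination -(d r * d (tail k)) * hsq (head k) (hT k hk)

theorem exists_ker_eq_one_of_balancedSource (hht : ∀ k, head k ≠ tail k)
    (hσ : ∀ k, σ k = 1 ∨ σ k = -1) (hT : T ∈ balancedSources head tail σ) {r : Fin N}
    (hr : r ∈ T) :
    ∃ x, Ls head tail σ *ᵥ x = 0 ∧ x r = 1 ∧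
      ∀ T' ∈ balancedSources head tail σ, T' ≠ T → ∀ i ∈ T', x i = 0 := by
  obtain ⟨d, hdr, hd⟩ := hT.2.exists_apply_eq_one hT.1.2.1 hr
  let U : Set (Fin N) := {i | ∃ T' ∈ balancedSources head tail σ, i ∈ T'}
  have hb : ∀ k, tail k ∈ U →
      (if tail k ∈ T then d (tail k) else 0) = σ k * if head k ∈ T then d (head k) else 0 := by
    rintro k ⟨T', hT', hk⟩
    by_cases htail : tail k ∈ T
    · rw [if_pos htail, if_pos (hT.1.2.1 k htail), hd k htail]
    · have hhead : head k ∉ T := fun hhead =>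
        htail (hT'.1.eq_of_mem hT.1 (hT'.1.2.1 k hk) hhead ▸ hk)
      rw [if_neg htail, if_neg hhead, mul_zero]
  obtain ⟨x, hx, hxU⟩ := exists_ker_extension hht hσ
    (U := U) (fun k ⟨T', hT', hk⟩ => ⟨T', hT', hT'.1.2.1 k hk⟩)
    (fun T' hT' => hT'.1.1.imp fun r hr => ⟨hr, T', hT', hr⟩)
    (b := fun i => if i ∈ T then d i else 0) hb
  refine ⟨x, hx, ?_, fun T' hT' hne i hi => ?_⟩
  · rw [hxU r ⟨T, hT, hr⟩, if_pos hr, hdr]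
  · rw [hxU i ⟨T', hT', hi⟩, if_neg fun hiT => hne (hT'.1.eq_of_mem hT.1 hi hiT)]

theorem finrank_ker_Ls (hht : ∀ k, head k ≠ tail k) (hσ : ∀ k, σ k = 1 ∨ σ k = -1) :
    Module.finrank ℝ (LinearMap.ker (Ls head tail σ).mulVecLin) =
      (balancedSources head tail σ).ncard := by
  choose r hr using fun T : balancedSources head tail σ => T.2.1.1
  choose x hxker hxr hx0 using fun T : balancedSources head tail σ =>
    exists_ker_eq_one_of_balancedSource hht hσ T.2 (hr T)
  let K := LinearMap.ker (Ls head tail σ).mulVecLin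
  let e : balancedSources head tail σ → K := fun T => ⟨x T, hxker T⟩
  let ε : balancedSources head tail σ → Module.Dual ℝ K := fun T =>
    LinearMap.proj (r T) ∘ₗ K.subtype
  have hdual : Module.DualBases e ε :=
    { eval_same := hxr
      eval_of_ne := fun T T' hne => hx0 T' T T.2 (Subtype.coe_ne_coe.2 hne) (r T) (hr T)
      total := by
        intro y z hyz
        have hdiff_ker : Ls head tail σ *ᵥ (y - z : K) = 0 := (y - z).2
        refine sub_eq_zero.1 (Subtype.ext ?_)
        exact eq_zero_of_Ls_mulVec_eq_zero hht hσ (fun i _ => congrFun hdiff_ker i)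
          fun T hT => ⟨r ⟨T, hT⟩, hr ⟨T, hT⟩, sub_eq_zero.2 (hyz ⟨T, hT⟩)⟩ }
  rw [Module.finrank_eq_nat_card_basis hdual.basis, Nat.card_coe_set_eq]

end Laplacian

theorem rank_laplacian_multileader_general {N M : ℕ} (head tail : Fin M → Fin N)
    (σ : Fin M → ℝ) (hht : ∀ k, head k ≠ tail k) (hσ : ∀ k, σ k = 1 ∨ σ k = -1) :
    (Ls head tail σ).rank = N - {i | IsRootNode tail i}.ncard -
      {T | IsRootedSCC head tail T ∧ SCCBalanced head tail σ T}.ncard := by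
  have hrank_nullity := LinearMap.finrank_range_add_finrank_ker (Ls head tail σ).mulVecLin
  rw [finrank_ker_Ls hht hσ, ncard_balancedSources hht, Module.finrank_fin_fun] at hrank_nullity
  rw [Matrix.rank]
  lia

theorem rank_laplacian_multileader {N M l₁ l₂ l2SB : ℕ}
    (head tail : Fin M → Fin N) (σ : Fin M → ℝ) (S : Fin l₂ → Finset (Fin N))
    (hht : ∀ k, head k ≠ tail k)
    (hinj : ∀ k k', head k = head k' → tail k = tail k' → k = k')
    (hσ : ∀ k, σ k = 1 ∨ σ k = -1)
    (hdss : ∀ k k', head k = tail k' → tail k = head k' → σ k = σ k')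
    -- multi-leader assumption:
    (hroots : {i : Fin N | IsRootNode tail i}.ncard = l₁)
    (hSCCs : ∀ j, IsRootedSCC head tail (S j))
    (hall : ∀ T : Finset (Fin N), IsRootedSCC head tail T → ∃ j, T = S j)
    (hdisj : ∀ j j', j ≠ j' → Disjoint (S j) (S j'))
    (hSBcount : {j : Fin l₂ | SCCBalanced head tail σ (S j)}.ncard = l2SB)
    (hm : 1 < l₁ + l₂)
    (hreach : ∀ i : Fin N, ¬ IsRootNode tail i → (∀ j, i ∉ S j) →
      ∃ a, (IsRootNode tail a ∨ ∃ j, a ∈ S j) ∧ Reaches head tail a i)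
    :
    (Ls head tail σ).rank = N - l₁ - l2SB := by
  have hS_injective := injective_of_pairwise_disjoint
    (fun j => (hSCCs j).isSourceComponent.1.ne_empty) hdisj
  rw [← hroots, ← hSBcount, ← ncard_isRootedSCC_and hSCCs hall hS_injective]
  exact rank_laplacian_multileader_general head tail σ hht hσ
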